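/- For each n, let X ~ P_{β_1,Q^{CW}} and Y ~ P_{β_2,Q^{CW}} be independent Ising random vectors on {−1,1}^n with the Curie–Weiss interaction matrix Q^{CW} = (1/n)(11ᵀ − I_n), where β_1, β_2 ≥ 0. Then √n · ρ_n converges in distribution to N(0,1), for any values of β_1, β_2 ≥ 0. -/

import Mathlib

open MeasureTheory ProbabilityTheory Filter Topology Matrix

noncomputable section

/-- The `±1` configuration associated to a boolean configuration. -/
def pmVec {ι : Type*} (s : ι → Bool) : ι → ℝ := fun i => if s i then 1 else -1

/-- Unnormalized Ising weight `exp((β/2) zᵀ Q z)`. -/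
def isingWeight {ι : Type*} [Fintype ι] (β : ℝ) (Q : Matrix ι ι ℝ) (z : ι → ℝ) : ℝ :=
  Real.exp (β / 2 * (z ⬝ᵥ Q.mulVec z))

/-- Ising partition function `Z(β,Q)`. -/
def isingZ (ι : Type*) [Fintype ι] [DecidableEq ι] (β : ℝ) (Q : Matrix ι ι ℝ) : ℝ :=
  ∑ s : ι → Bool, isingWeight β Q (pmVec s)

/-- The Ising probability measure `P_{β,Q}` on `{±1}^ι ⊆ ℝ^ι`:
`P(z) = exp((β/2) zᵀQz) / Z(β,Q)`. -/
def isingMeasure (ι : Type*) [Fintype ι] [DecidableEq ι] (β : ℝ) (Q : Matrix ι ι ℝ) :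
    Measure (ι → ℝ) :=
  ∑ s : ι → Bool,
    ENNReal.ofReal (isingWeight β Q (pmVec s) / isingZ ι β Q) • Measure.dirac (pmVec s)

/-- Sample mean `X̄ = (1/n) Σ_i X_i`. -/
def sampleMean {ι : Type*} [Fintype ι] (x : ι → ℝ) : ℝ := (∑ i, x i) / (Fintype.card ι : ℝ)

/-- Sample covariance `T_n = (1/n) Σ_i (X_i - X̄)(Y_i - Ȳ)`. -/
def sampleCov {ι : Type*} [Fintype ι] (x y : ι → ℝ) : ℝ :=
  (∑ i, (x i - sampleMean x) * (y i - sampleMean y)) / (Fintype.card ι : ℝ)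

/-- Convergence in distribution: weak convergence of the laws, tested against
bounded continuous functions. -/
def TendstoInDistribution (μ : ℕ → Measure ℝ) (ν : Measure ℝ) : Prop :=
  ∀ f : BoundedContinuousFunction ℝ ℝ,
    Tendsto (fun n => ∫ x, f x ∂(μ n)) atTop (𝓝 (∫ x, f x ∂ν))

/-- The Curie–Weiss interaction matrix `Q^{CW} = (1/n)(11ᵀ - I)`. -/
def QCW (n : ℕ) : Matrix (Fin n) (Fin n) ℝ := fun i j => if i = j then 0 else (n : ℝ)⁻¹

/-- `m(β)`: equal to `0` for `β ≤ 1`, and to the unique positive root of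
`m = tanh(β m)` for `β > 1`. -/
def isingMag (β : ℝ) : ℝ := sSup {m : ℝ | 0 ≤ m ∧ m = Real.tanh (β * m)}


/-- Sample correlation `ρₙ`. -/
def sampleCorr {ι : Type*} [Fintype ι] (x y : ι → ℝ) : ℝ :=
  (∑ i, (x i - sampleMean x) * (y i - sampleMean y)) /
    (Real.sqrt (∑ i, (x i - sampleMean x) ^ 2) * Real.sqrt (∑ i, (y i - sampleMean y) ^ 2))

/-!
The Curie–Weiss law is invariant under permutations of the coordinates, so `√n ρₙ` has the law of
`√n ρ(X ∘ σ, Y)` with `σ` a uniformly random permutation. Condition on `X` and `Y`. Composing `σ`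
with a random transposition gives an exchangeable pair in which the statistic has exactly linear
drift, and because the entries are `±1`, the conditional second moment of its increment is an
explicit quadratic polynomial in the statistic. Stein's method then bounds the distance between
the characteristic functions of the permutation distribution and of `N(0,1)` by
`O(n^{-1/2} (Var X · Var Y)^{-1/2})`, with `Var` the sample variance. For `N₊` plus and `N₋` minus
spins the inverse sample variance is of order `n (1/N₊ + 1/N₋)`, so the central limit theorem holds
as soon as the expectation of `1/(N₊ + 1) + 1/(N₋ + 1)` is `o(n^{-1/2})`. Flipping one spin changes
an Ising weight by a bounded factor when the row sums of `|Q|` are bounded, and this forces the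
expectation to be `O(1/n)` at every temperature, so no case distinction in `β` occurs.
-/

open scoped BigOperators

theorem norm_exp_mul_I_sub_one_sub_le (t : ℝ) :
    ‖Complex.exp (t * Complex.I) - 1 - t * Complex.I‖ ≤ t ^ 2 := by
  have hderiv (u : ℝ) : HasDerivAt
      (fun v : ℝ => Complex.exp (v * Complex.I) - 1 - v * Complex.I)
      (Complex.exp (u * Complex.I) * Complex.I - Complex.I) u := by
    have hlin : HasDerivAt (fun v : ℝ => (v : ℂ) * Complex.I) Complex.I u := by
      simpa using (HasDerivAt.ofReal_comp (hasDerivAt_id u)).mul_const Complex.I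
    exact (hlin.cexp.sub_const 1).sub hlin
  have hbound (u : ℝ) (hu : u ∈ Set.uIcc 0 t) :
      ‖Complex.exp (u * Complex.I) * Complex.I - Complex.I‖ ≤ |t| := by
    rw [← sub_one_mul, norm_mul, Complex.norm_I, mul_one, mul_comm (u : ℂ)]
    refine Real.norm_exp_I_mul_ofReal_sub_one_le.trans ?_
    simpa using Set.abs_sub_left_of_mem_uIcc hu
  have := (convex_uIcc 0 t).norm_image_sub_le_of_norm_hasDerivWithin_le
    (fun u _ => (hderiv u).hasDerivWithinAt) hbound Set.left_mem_uIcc Set.right_mem_uIcc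
  simpa [← sq] using this

theorem norm_sub_exp_neg_sq_div_two_le {φ φ' : ℝ → ℂ} {ε t : ℝ}
    (hφ : ∀ u, HasDerivAt φ (φ' u) u) (hφ0 : φ 0 = 1)
    (hε : ∀ u, |u| ≤ |t| → ‖φ' u + u * φ u‖ ≤ ε) :
    ‖φ t - Complex.exp (-t ^ 2 / 2)‖ ≤ ε * |t| := by
  set h : ℝ → ℂ := fun u => Complex.exp (u ^ 2 / 2) * φ u with h_def
  have hderiv (u : ℝ) : HasDerivAt h (Complex.exp (u ^ 2 / 2) * (φ' u + u * φ u)) u := by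
    have hsq : HasDerivAt (fun v : ℝ => (v : ℂ) ^ 2 / 2) (u : ℂ) u := by
      simpa using ((HasDerivAt.ofReal_comp (hasDerivAt_id u)).pow 2).div_const 2
    exact (hsq.cexp.mul (hφ u)).congr_deriv (by ring)
  have hnorm (u : ℝ) : ‖Complex.exp ((u : ℂ) ^ 2 / 2)‖ = Real.exp (u ^ 2 / 2) := by
    rw [Complex.norm_exp]; norm_cast
  have hbound (u : ℝ) (hu : u ∈ Set.uIcc 0 t) :
      ‖Complex.exp (u ^ 2 / 2) * (φ' u + u * φ u)‖ ≤ Real.exp (t ^ 2 / 2) * ε := by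
    have hut : |u| ≤ |t| := by simpa using Set.abs_sub_left_of_mem_uIcc hu
    rw [norm_mul, hnorm]
    gcongr ?_ * ?_
    · gcongr Real.exp (?_ / 2)
      exact sq_le_sq.2 hut
    · exact hε u hut
  have hmvt : ‖h t - h 0‖ ≤ Real.exp (t ^ 2 / 2) * ε * ‖t - 0‖ :=
    (convex_uIcc 0 t).norm_image_sub_le_of_norm_hasDerivWithin_le
      (fun u _ => (hderiv u).hasDerivWithinAt) hbound Set.left_mem_uIcc Set.right_mem_uIcc
  have hfactor : h t - h 0 = Complex.exp (t ^ 2 / 2) * (φ t - Complex.exp (-t ^ 2 / 2)) := by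
    rw [mul_sub, ← Complex.exp_add]
    simp [h_def, hφ0, neg_div]
  rw [hfactor, norm_mul, hnorm, sub_zero, Real.norm_eq_abs, mul_assoc] at hmvt
  exact le_of_mul_le_mul_left hmvt (Real.exp_pos _)

theorem norm_sum_mul_exp_sub_one_sub_le {A : Type*} [Fintype A] {D : A → ℝ} {δ : ℝ}
    (hD : ∀ a, |D a| ≤ δ) (u v : ℝ) :
    ‖∑ a, D a * (Complex.exp (u * D a * Complex.I) - 1) - u * v * Complex.I‖ ≤
      u ^ 2 * δ * ∑ a, D a ^ 2 + |u| * |∑ a, D a ^ 2 - v| := by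
  have split : ∑ a, D a * (Complex.exp (u * D a * Complex.I) - 1) - u * v * Complex.I =
      ∑ a, D a * (Complex.exp (u * D a * Complex.I) - 1 - u * D a * Complex.I)
        + u * ((∑ a, D a ^ 2 - v : ℝ) : ℂ) * Complex.I := by
    push_cast
    simp only [mul_sub, Finset.sum_sub_distrib, Finset.mul_sum, sub_mul, Finset.sum_mul]
    have (a : A) : (D a : ℂ) * (u * D a * Complex.I) = u * D a ^ 2 * Complex.I := by ring
    simp only [this]
    ring
  have remainder (a : A) :
      ‖D a * (Complex.exp (u * D a * Complex.I) - 1 - u * D a * Complex.I)‖ ≤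
        u ^ 2 * δ * D a ^ 2 :=
    calc ‖D a * (Complex.exp (u * D a * Complex.I) - 1 - u * D a * Complex.I)‖
        ≤ |D a| * (u * D a) ^ 2 := by
          rw [norm_mul, Complex.norm_real, Real.norm_eq_abs]
          gcongr
          simpa using norm_exp_mul_I_sub_one_sub_le (u * D a)
      _ ≤ δ * (u * D a) ^ 2 := by gcongr; exact hD a
      _ = u ^ 2 * δ * D a ^ 2 := by ring
  rw [split, Finset.mul_sum]
  refine norm_add_le_of_le (norm_sum_le_of_le _ fun a _ => remainder a) ?_
  rw [norm_mul, norm_mul, Complex.norm_I, mul_one, Complex.norm_real, Complex.norm_real]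
  rfl

section ExchangeablePairs

variable {Ω A : Type*} [Fintype Ω] [Fintype A] {τ : A → Equiv.Perm Ω} {W : Ω → ℝ} {c δ : ℝ}

/-- With `ω` uniform on `Ω` and `a` uniform on `A`, the pair `(W ω, W (τ a ω))` is exchangeable. -/
theorem sum_smul_eq_sum_sum_sub_smul_sub {E : Type*} [AddCommGroup E] [Module ℝ E]
    (hτ : ∀ a, Function.Involutive (τ a)) (hW : ∀ ω, ∑ a, (W (τ a ω) - W ω) = -(c * W ω))
    (h : Ω → E) :
    (2 * c) • ∑ ω, W ω • h ω = ∑ ω, ∑ a, (W (τ a ω) - W ω) • (h (τ a ω) - h ω) := by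
  have antisymm : ∑ ω, ∑ a, (W (τ a ω) - W ω) • (h (τ a ω) + h ω) = 0 := by
    rw [Finset.sum_comm]
    refine Finset.sum_eq_zero fun a _ => Finset.sum_involution (fun ω _ => τ a ω)
      (fun ω _ => ?_) (fun ω _ hω hfix => hω ?_) (fun _ _ => Finset.mem_univ _)
      fun ω _ => hτ a ω
    · rw [hτ a ω]
      module
    · rw [hfix, sub_self, zero_smul]
  have drift : ∀ ω, ∑ a, (W (τ a ω) - W ω) • h ω = -(c * W ω) • h ω := fun ω => by
    rw [← Finset.sum_smul, hW]
  calc (2 * c) • ∑ ω, W ω • h ω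
      = -2 • ∑ ω, ∑ a, (W (τ a ω) - W ω) • h ω := by
        simp only [drift, Finset.smul_sum]
        exact Finset.sum_congr rfl fun ω _ => by module
    _ = ∑ ω, ∑ a, (W (τ a ω) - W ω) • (h (τ a ω) + h ω)
          - 2 • ∑ ω, ∑ a, (W (τ a ω) - W ω) • h ω := by rw [antisymm]; module
    _ = ∑ ω, ∑ a, (W (τ a ω) - W ω) • (h (τ a ω) - h ω) := by
        simp only [Finset.smul_sum, ← Finset.sum_sub_distrib]
        exact Finset.sum_congr rfl fun ω _ => Finset.sum_congr rfl fun a _ => by module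

theorem sum_eq_zero_of_drift (hc : c ≠ 0) (hτ : ∀ a, Function.Involutive (τ a))
    (hW : ∀ ω, ∑ a, (W (τ a ω) - W ω) = -(c * W ω)) : ∑ ω, W ω = 0 := by
  simpa [hc] using sum_smul_eq_sum_sum_sub_smul_sub hτ hW fun _ => (1 : ℝ)

theorem sum_sum_sub_sq_eq (hτ : ∀ a, Function.Involutive (τ a))
    (hW : ∀ ω, ∑ a, (W (τ a ω) - W ω) = -(c * W ω)) :
    ∑ ω, ∑ a, (W (τ a ω) - W ω) ^ 2 = 2 * c * ∑ ω, W ω ^ 2 := by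
  simpa only [smul_eq_mul, ← sq] using (sum_smul_eq_sum_sum_sub_smul_sub hτ hW W).symm

theorem two_mul_sum_mul_exp_sub_eq (hτ : ∀ a, Function.Involutive (τ a))
    (hW : ∀ ω, ∑ a, (W (τ a ω) - W ω) = -(c * W ω)) (u : ℝ) :
    ((2 * c : ℝ) : ℂ) * (∑ ω, W ω * Complex.exp (u * W ω * Complex.I)
        - u * Complex.I * ∑ ω, Complex.exp (u * W ω * Complex.I)) =
      ∑ ω, Complex.exp (u * W ω * Complex.I) *
        (∑ a, ((W (τ a ω) - W ω : ℝ) : ℂ)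
            * (Complex.exp (u * (W (τ a ω) - W ω : ℝ) * Complex.I) - 1)
          - u * (2 * c : ℝ) * Complex.I) := by
  have increment (ω : Ω) (a : A) : Complex.exp (u * W (τ a ω) * Complex.I)
        - Complex.exp (u * W ω * Complex.I) =
      Complex.exp (u * W ω * Complex.I)
        * (Complex.exp (u * (W (τ a ω) - W ω : ℝ) * Complex.I) - 1) := by
    rw [mul_sub_one, ← Complex.exp_add]
    push_cast
    ring_nf
  have := sum_smul_eq_sum_sum_sub_smul_sub hτ hW fun ω => Complex.exp (u * W ω * Complex.I)
  simp only [Complex.real_smul, increment, mul_left_comm _ (Complex.exp _),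
    ← Finset.mul_sum] at this
  rw [mul_sub, this, ← mul_assoc, Finset.mul_sum, ← Finset.sum_sub_distrib]
  exact Finset.sum_congr rfl fun ω _ => by ring

theorem norm_sum_mul_exp_sub_le (hc : 0 < c) (hτ : ∀ a, Function.Involutive (τ a))
    (hW : ∀ ω, ∑ a, (W (τ a ω) - W ω) = -(c * W ω))
    (hδ : ∀ ω a, |W (τ a ω) - W ω| ≤ δ) (u : ℝ) :
    ‖∑ ω, W ω * Complex.exp (u * W ω * Complex.I)
        - u * Complex.I * ∑ ω, Complex.exp (u * W ω * Complex.I)‖ ≤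
      |u| * ((∑ ω, |∑ a, (W (τ a ω) - W ω) ^ 2 - 2 * c|) / (2 * c))
        + u ^ 2 * δ * ∑ ω, W ω ^ 2 := by
  refine le_of_mul_le_mul_left ?_ (by positivity : 0 < 2 * c)
  calc 2 * c * ‖∑ ω, W ω * Complex.exp (u * W ω * Complex.I)
        - u * Complex.I * ∑ ω, Complex.exp (u * W ω * Complex.I)‖
      = ‖((2 * c : ℝ) : ℂ) * (∑ ω, W ω * Complex.exp (u * W ω * Complex.I)
        - u * Complex.I * ∑ ω, Complex.exp (u * W ω * Complex.I))‖ := by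
        rw [norm_mul, Complex.norm_real, Real.norm_of_nonneg (by positivity)]
    _ ≤ ∑ ω, (u ^ 2 * δ * ∑ a, (W (τ a ω) - W ω) ^ 2
          + |u| * |∑ a, (W (τ a ω) - W ω) ^ 2 - 2 * c|) := by
        rw [two_mul_sum_mul_exp_sub_eq hτ hW]
        refine norm_sum_le_of_le _ fun ω _ => ?_
        rw [norm_mul, ← Complex.ofReal_mul, Complex.norm_exp_ofReal_mul_I, one_mul]
        exact norm_sum_mul_exp_sub_one_sub_le (hδ ω) u (2 * c)
    _ = u ^ 2 * δ * (2 * c * ∑ ω, W ω ^ 2)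
          + |u| * ∑ ω, |∑ a, (W (τ a ω) - W ω) ^ 2 - 2 * c| := by
        rw [Finset.sum_add_distrib, ← Finset.mul_sum, ← Finset.mul_sum,
          sum_sum_sub_sq_eq hτ hW]
    _ = 2 * c * (|u| * ((∑ ω, |∑ a, (W (τ a ω) - W ω) ^ 2 - 2 * c|) / (2 * c))
          + u ^ 2 * δ * ∑ ω, W ω ^ 2) := by
        field_simp
        ring

/-- The regression identity makes `φ u = 𝔼 exp (i u W)` an approximate solution of `φ' = -u φ`,
the differential equation of the Gaussian characteristic function. -/
theorem norm_expect_exp_sub_exp_le [Nonempty Ω] (hc : 0 < c)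
    (hτ : ∀ a, Function.Involutive (τ a))
    (hW : ∀ ω, ∑ a, (W (τ a ω) - W ω) = -(c * W ω))
    (hδ₀ : 0 ≤ δ) (hδ : ∀ ω a, |W (τ a ω) - W ω| ≤ δ) (t : ℝ) :
    ‖𝔼 ω, Complex.exp (t * W ω * Complex.I) - Complex.exp (-t ^ 2 / 2)‖ ≤
      (|t| * ((𝔼 ω, |∑ a, (W (τ a ω) - W ω) ^ 2 - 2 * c|) / (2 * c))
        + t ^ 2 * δ * 𝔼 ω, W ω ^ 2) * |t| := by
  set N : ℝ := (Fintype.card Ω : ℝ) with hN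
  have hN_pos : 0 < N := by rw [hN]; exact_mod_cast Fintype.card_pos
  have hNC : ((Fintype.card Ω : ℕ) : ℂ) = (N : ℂ) := by simp [hN]
  simp only [Fintype.expect_eq_sum_div_card, hNC, ← hN]
  refine norm_sub_exp_neg_sq_div_two_le
    (φ := fun u => (∑ ω, Complex.exp (u * W ω * Complex.I)) / N)
    (φ' := fun u => (∑ ω, W ω * Complex.exp (u * W ω * Complex.I)) * Complex.I / N)
    (fun u => ?_) ?_ fun u hu => ?_
  · rw [Finset.sum_mul]
    refine (HasDerivAt.fun_sum fun ω _ => ?_).div_const _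
    have hlin : HasDerivAt (fun v : ℝ => (v : ℂ) * W ω * Complex.I) (W ω * Complex.I) u := by
      simpa using ((HasDerivAt.ofReal_comp (hasDerivAt_id u)).mul_const _).mul_const Complex.I
    exact hlin.cexp.congr_deriv (by ring)
  · simp [hN]
  · calc _ = ‖((∑ ω, W ω * Complex.exp (u * W ω * Complex.I)
            - u * Complex.I * ∑ ω, Complex.exp (u * W ω * Complex.I)) / N) * Complex.I‖ := by
          congr 1
          linear_combination
            (u * (∑ ω, Complex.exp (u * W ω * Complex.I)) / N) * Complex.I_sq
      _ = ‖∑ ω, W ω * Complex.exp (u * W ω * Complex.I)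
            - u * Complex.I * ∑ ω, Complex.exp (u * W ω * Complex.I)‖ / N := by
          rw [norm_mul, Complex.norm_I, mul_one, norm_div, Complex.norm_real,
            Real.norm_of_nonneg hN_pos.le]
      _ ≤ (|t| * ((∑ ω, |∑ a, (W (τ a ω) - W ω) ^ 2 - 2 * c|) / (2 * c))
            + t ^ 2 * δ * ∑ ω, W ω ^ 2) / N := by
          gcongr
          refine (norm_sum_mul_exp_sub_le hc hτ hW hδ u).trans ?_
          gcongr ?_ * _ + ?_ * _ * _
          exact sq_le_sq.2 hu
      _ = _ := by ring

end ExchangeablePairs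

section SampleCorrelation

variable {ι : Type*} [Fintype ι] {x y : ι → ℝ}

theorem nonempty_of_sampleCov_ne_zero (h : sampleCov x y ≠ 0) : Nonempty ι :=
  not_isEmpty_iff.1 fun _ => h (by simp [sampleCov])

theorem sampleCov_eq (x y : ι → ℝ) :
    sampleCov x y = (∑ i, x i * y i) / Fintype.card ι - sampleMean x * sampleMean y := by
  rcases isEmpty_or_nonempty ι with hι | hι
  · simp [sampleCov, sampleMean]
  · have hn : (Fintype.card ι : ℝ) ≠ 0 := by exact_mod_cast Fintype.card_ne_zero
    simp only [sampleCov, sub_mul, mul_sub, Finset.sum_sub_distrib, ← Finset.mul_sum,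
      ← Finset.sum_mul, Finset.sum_const, Finset.card_univ, nsmul_eq_mul]
    simp only [sampleMean]
    field_simp
    ring

theorem sampleCorr_eq_sampleCov_div (x y : ι → ℝ) :
    sampleCorr x y = sampleCov x y / (√(sampleCov x x) * √(sampleCov y y)) := by
  rcases isEmpty_or_nonempty ι with hι | hι
  · simp [sampleCorr, sampleCov]
  · have hn : (0 : ℝ) < Fintype.card ι := by exact_mod_cast Fintype.card_pos
    have hsqrt (z : ι → ℝ) : √(∑ i, (z i - sampleMean z) ^ 2) =
        √(sampleCov z z) * √(Fintype.card ι) := by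
      rw [← Real.sqrt_mul' _ hn.le, sampleCov, div_mul_cancel₀ _ hn.ne']
      simp only [sq]
    rw [sampleCorr, hsqrt, hsqrt, mul_mul_mul_comm, Real.mul_self_sqrt hn.le, mul_comm,
      ← div_div]
    rfl

theorem sampleMean_comp_perm (σ : Equiv.Perm ι) (x : ι → ℝ) :
    sampleMean (x ∘ σ) = sampleMean x := by
  simp only [sampleMean, Function.comp_apply, Equiv.sum_comp σ x]

theorem sampleCov_comp_perm_self (σ : Equiv.Perm ι) (x : ι → ℝ) :
    sampleCov (x ∘ σ) (x ∘ σ) = sampleCov x x := by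
  simp only [sampleCov_eq, sampleMean_comp_perm, Function.comp_apply,
    Equiv.sum_comp σ fun i => x i * x i]

theorem sum_mul_comp_swap [DecidableEq ι] (x y : ι → ℝ) (i j : ι) :
    ∑ k, (x ∘ Equiv.swap i j) k * y k = ∑ k, x k * y k - (x i - x j) * (y i - y j) := by
  rcases eq_or_ne i j with rfl | hij
  · simp
  · have change : ∑ k, ((x ∘ Equiv.swap i j) k * y k - x k * y k) =
        (x j * y i - x i * y i) + (x i * y j - x j * y j) := by
      rw [Fintype.sum_eq_add i j hij fun k hk => by
        simp [Equiv.swap_apply_of_ne_of_ne hk.1 hk.2]]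
      simp
    rw [Finset.sum_sub_distrib] at change
    linear_combination change

theorem sampleCov_comp_swap [DecidableEq ι] (x y : ι → ℝ) (i j : ι) :
    sampleCov (x ∘ Equiv.swap i j) y =
      sampleCov x y - (x i - x j) * (y i - y j) / Fintype.card ι := by
  rw [sampleCov_eq, sampleCov_eq, sum_mul_comp_swap, sampleMean_comp_perm]
  ring

theorem sampleCorr_comp_swap_sub [DecidableEq ι] (x y : ι → ℝ) (i j : ι) :
    sampleCorr (x ∘ Equiv.swap i j) y - sampleCorr x y =
      -((x i - x j) * (y i - y j))
        / (Fintype.card ι * (√(sampleCov x x) * √(sampleCov y y))) := by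
  rw [sampleCorr_eq_sampleCov_div, sampleCorr_eq_sampleCov_div, sampleCov_comp_perm_self,
    sampleCov_comp_swap, ← sub_div, sub_sub_cancel_left, neg_div', div_div]

theorem sum_sum_sub_mul_sub (x y : ι → ℝ) :
    ∑ i, ∑ j, (x i - x j) * (y i - y j) = 2 * (Fintype.card ι : ℝ) ^ 2 * sampleCov x y := by
  rcases isEmpty_or_nonempty ι with hι | hι
  · simp
  · have hn : (Fintype.card ι : ℝ) ≠ 0 := by exact_mod_cast Fintype.card_ne_zero
    have expand (i j : ι) : (x i - x j) * (y i - y j) =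
        x i * y i - x i * y j - (y i * x j - x j * y j) := by ring
    simp only [expand, Finset.sum_sub_distrib, ← Finset.mul_sum, ← Finset.sum_mul,
      Finset.sum_const, Finset.card_univ, nsmul_eq_mul, sampleCov_eq, sampleMean,
      mul_left_comm _ (Fintype.card ι : ℝ)]
    field_simp
    ring

theorem sampleCov_self_eq_of_sq_eq_one [Nonempty ι] (hx : ∀ i, x i ^ 2 = 1) :
    sampleCov x x = 1 - sampleMean x ^ 2 := by
  simp [sampleCov_eq, ← sq, hx]

theorem sampleCov_self_le_one (hx : ∀ i, x i ^ 2 = 1) : sampleCov x x ≤ 1 := by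
  rcases isEmpty_or_nonempty ι with hι | hι
  · simp [sampleCov]
  · rw [sampleCov_self_eq_of_sq_eq_one hx]
    exact sub_le_self _ (sq_nonneg _)

theorem abs_sampleMean_le_one (hx : ∀ i, x i ^ 2 = 1) : |sampleMean x| ≤ 1 := by
  rcases isEmpty_or_nonempty ι with hι | hι
  · simp [sampleMean]
  · have hcov : 0 ≤ sampleCov x x := by
      rw [sampleCov]
      exact div_nonneg (Finset.sum_nonneg fun i _ => mul_self_nonneg _) (Nat.cast_nonneg _)
    rw [sampleCov_self_eq_of_sq_eq_one hx, sub_nonneg] at hcov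
    exact (sq_le_one_iff_abs_le_one _).1 hcov

theorem sum_sum_sub_sq_mul_sub_sq (hx : ∀ i, x i ^ 2 = 1) (hy : ∀ i, y i ^ 2 = 1) :
    ∑ i, ∑ j, ((x i - x j) * (y i - y j)) ^ 2 =
      4 * (Fintype.card ι : ℝ) ^ 2 * (sampleCov x x * sampleCov y y
        + sampleCov x y ^ 2 + 2 * (sampleMean x * sampleMean y) * sampleCov x y) := by
  rcases isEmpty_or_nonempty ι with hι | hι
  · simp
  · have hn : (Fintype.card ι : ℝ) ≠ 0 := by exact_mod_cast Fintype.card_ne_zero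
    have expand (i j : ι) : ((x i - x j) * (y i - y j)) ^ 2 =
        4 - 4 * (x i * x j) - 4 * (y i * y j) + 4 * ((x i * y i) * (x j * y j)) := by
      have sq_sub (z : ι → ℝ) (hz : ∀ i, z i ^ 2 = 1) :
          (z i - z j) ^ 2 = 2 - 2 * (z i * z j) := by
        linear_combination hz i + hz j
      rw [mul_pow, sq_sub x hx, sq_sub y hy]
      ring
    simp only [expand, Finset.sum_sub_distrib, Finset.sum_add_distrib, ← Finset.mul_sum,
      ← Finset.sum_mul, Finset.sum_const, Finset.card_univ, nsmul_eq_mul,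
      sampleCov_self_eq_of_sq_eq_one hx, sampleCov_self_eq_of_sq_eq_one hy]
    simp only [sampleCov_eq, sampleMean]
    field_simp
    ring

theorem sum_sampleCorr_comp_swap_sub [DecidableEq ι] (x y : ι → ℝ) :
    ∑ a : ι × ι, (sampleCorr (x ∘ Equiv.swap a.1 a.2) y - sampleCorr x y) =
      -(2 * Fintype.card ι * sampleCorr x y) := by
  rcases isEmpty_or_nonempty ι with hι | hι
  · simp
  · have hn : (Fintype.card ι : ℝ) ≠ 0 := by exact_mod_cast Fintype.card_ne_zero
    simp only [sampleCorr_comp_swap_sub, ← Finset.sum_div, Finset.sum_neg_distrib,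
      Fintype.sum_prod_type, sum_sum_sub_mul_sub]
    rw [sampleCorr_eq_sampleCov_div, ← mul_div_assoc, ← mul_div_mul_left (2 * _ * _) _ hn]
    ring

theorem sum_sampleCorr_comp_swap_sub_sq [DecidableEq ι] (hx : ∀ i, x i ^ 2 = 1)
    (hy : ∀ i, y i ^ 2 = 1) (hxx : 0 < sampleCov x x) (hyy : 0 < sampleCov y y) :
    ∑ a : ι × ι, (sampleCorr (x ∘ Equiv.swap a.1 a.2) y - sampleCorr x y) ^ 2 =
      4 * (1 + sampleCorr x y ^ 2 + 2 * (sampleMean x * sampleMean y) * sampleCorr x y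
        / (√(sampleCov x x) * √(sampleCov y y))) := by
  have := nonempty_of_sampleCov_ne_zero hxx.ne'
  have hn : (Fintype.card ι : ℝ) ≠ 0 := by exact_mod_cast Fintype.card_ne_zero
  have hs_sq : (√(sampleCov x x) * √(sampleCov y y)) ^ 2 = sampleCov x x * sampleCov y y := by
    rw [mul_pow, Real.sq_sqrt hxx.le, Real.sq_sqrt hyy.le]
  simp only [sampleCorr_comp_swap_sub, div_pow, neg_sq, ← Finset.sum_div, Fintype.sum_prod_type,
    sum_sum_sub_sq_mul_sub_sq hx hy, ← hs_sq]
  rw [sampleCorr_eq_sampleCov_div]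
  field_simp

theorem abs_sampleCorr_comp_swap_sub_le [DecidableEq ι] (hx : ∀ i, x i ^ 2 = 1)
    (hy : ∀ i, y i ^ 2 = 1) (i j : ι) :
    |sampleCorr (x ∘ Equiv.swap i j) y - sampleCorr x y| ≤
      4 / (Fintype.card ι * (√(sampleCov x x) * √(sampleCov y y))) := by
  have abs_sub_le_two (z : ι → ℝ) (hz : ∀ i, z i ^ 2 = 1) : |z i - z j| ≤ 2 := by
    have abs_le_one (k : ι) : |z k| ≤ 1 := (sq_le_one_iff_abs_le_one _).1 (hz k).le
    linarith [abs_sub (z i) (z j), abs_le_one i, abs_le_one j]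
  rw [sampleCorr_comp_swap_sub, abs_div, abs_neg, abs_mul,
    abs_of_nonneg (by positivity : 0 ≤ Fintype.card ι * (√(sampleCov x x) * √(sampleCov y y)))]
  gcongr
  linarith [mul_le_mul (abs_sub_le_two x hx) (abs_sub_le_two y hy) (abs_nonneg _) two_pos.le]

end SampleCorrelation

section PermutationCLT

theorem involutive_mulRight_swap {ι : Type*} [DecidableEq ι] (i j : ι) :
    Function.Involutive (Equiv.mulRight (Equiv.swap i j)) := fun σ => by
  simp [mul_assoc]

variable {ι : Type*} [Fintype ι] [DecidableEq ι] {x y : ι → ℝ}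

/-- The statistic `√n ρₙ` after permuting the first sample by `σ`; its law under a uniformly
random `σ` is the permutation distribution of the correlation. -/
def permCorr (x y : ι → ℝ) (σ : Equiv.Perm ι) : ℝ :=
  √(Fintype.card ι) * sampleCorr (x ∘ σ) y

theorem permCorr_mul_swap_sub (x y : ι → ℝ) (σ : Equiv.Perm ι) (a : ι × ι) :
    permCorr x y (Equiv.mulRight (Equiv.swap a.1 a.2) σ) - permCorr x y σ =
      √(Fintype.card ι)
        * (sampleCorr ((x ∘ σ) ∘ Equiv.swap a.1 a.2) y - sampleCorr (x ∘ σ) y) := by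
  simp only [permCorr, Equiv.coe_mulRight, Equiv.Perm.coe_mul, Function.comp_assoc, mul_sub]

theorem sum_permCorr_mul_swap_sub (x y : ι → ℝ) (σ : Equiv.Perm ι) :
    ∑ a : ι × ι, (permCorr x y (Equiv.mulRight (Equiv.swap a.1 a.2) σ) - permCorr x y σ) =
      -(2 * Fintype.card ι * permCorr x y σ) := by
  simp only [permCorr_mul_swap_sub, ← Finset.mul_sum, sum_sampleCorr_comp_swap_sub]
  rw [permCorr]
  ring

theorem sum_permCorr_mul_swap_sub_sq (hx : ∀ i, x i ^ 2 = 1) (hy : ∀ i, y i ^ 2 = 1)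
    (hxx : 0 < sampleCov x x) (hyy : 0 < sampleCov y y) (σ : Equiv.Perm ι) :
    ∑ a : ι × ι,
        (permCorr x y (Equiv.mulRight (Equiv.swap a.1 a.2) σ) - permCorr x y σ) ^ 2 =
      4 * Fintype.card ι + 4 * permCorr x y σ ^ 2
        + 8 * √(Fintype.card ι) * (sampleMean x * sampleMean y)
          / (√(sampleCov x x) * √(sampleCov y y)) * permCorr x y σ := by
  simp only [permCorr_mul_swap_sub, mul_pow, ← Finset.mul_sum]
  rw [sum_sampleCorr_comp_swap_sub_sq (x := x ∘ σ) (fun i => hx (σ i)) hy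
      (by rwa [sampleCov_comp_perm_self]) hyy,
    sampleCov_comp_perm_self, sampleMean_comp_perm, permCorr, mul_pow]
  have hn := Real.sq_sqrt (Nat.cast_nonneg (α := ℝ) (Fintype.card ι))
  set N : ℝ := (Fintype.card ι : ℝ)
  linear_combination 4 * hn

theorem card_sub_one_mul_expect_permCorr_sq (hx : ∀ i, x i ^ 2 = 1) (hy : ∀ i, y i ^ 2 = 1)
    (hxx : 0 < sampleCov x x) (hyy : 0 < sampleCov y y) :
    ((Fintype.card ι : ℝ) - 1) * 𝔼 σ, permCorr x y σ ^ 2 = Fintype.card ι := by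
  have := nonempty_of_sampleCov_ne_zero hxx.ne'
  have hn : (Fintype.card ι : ℝ) ≠ 0 := by exact_mod_cast Fintype.card_ne_zero
  have hmean : ∑ σ, permCorr x y σ = 0 :=
    sum_eq_zero_of_drift (mul_ne_zero two_ne_zero hn)
      (fun a : ι × ι => involutive_mulRight_swap a.1 a.2) (sum_permCorr_mul_swap_sub x y)
  have hsq := sum_sum_sub_sq_eq (fun a : ι × ι => involutive_mulRight_swap a.1 a.2)
    (sum_permCorr_mul_swap_sub x y)
  simp only [sum_permCorr_mul_swap_sub_sq hx hy hxx hyy, Finset.sum_add_distrib, ← Finset.mul_sum,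
    hmean, Finset.sum_const, Finset.card_univ, nsmul_eq_mul] at hsq
  have hcard : (Fintype.card (Equiv.Perm ι) : ℝ) ≠ 0 := by exact_mod_cast Fintype.card_ne_zero
  rw [Fintype.expect_eq_sum_div_card]
  field_simp
  linear_combination -hsq / 4

theorem expect_permCorr_sq_le_two (hx : ∀ i, x i ^ 2 = 1) (hy : ∀ i, y i ^ 2 = 1)
    (hxx : 0 < sampleCov x x) (hyy : 0 < sampleCov y y) : 𝔼 σ, permCorr x y σ ^ 2 ≤ 2 := by
  have h := card_sub_one_mul_expect_permCorr_sq hx hy hxx hyy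
  have hn : 2 ≤ Fintype.card ι := by
    by_contra! hlt
    have := nonempty_of_sampleCov_ne_zero hxx.ne'
    have hcard : Fintype.card ι = 1 := by have := Fintype.card_pos (α := ι); omega
    norm_num [hcard] at h
  have hn' : (2 : ℝ) ≤ Fintype.card ι := by exact_mod_cast hn
  nlinarith

theorem abs_permCorr_mul_swap_sub_le (hx : ∀ i, x i ^ 2 = 1) (hy : ∀ i, y i ^ 2 = 1)
    (σ : Equiv.Perm ι) (a : ι × ι) :
    |permCorr x y (Equiv.mulRight (Equiv.swap a.1 a.2) σ) - permCorr x y σ| ≤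
      4 / (√(Fintype.card ι) * (√(sampleCov x x) * √(sampleCov y y))) := by
  rw [permCorr_mul_swap_sub, abs_mul, abs_of_nonneg (Real.sqrt_nonneg _)]
  calc _ ≤ √(Fintype.card ι) * (4 / (Fintype.card ι * (√(sampleCov x x) * √(sampleCov y y)))) := by
        gcongr
        simpa only [sampleCov_comp_perm_self] using
          abs_sampleCorr_comp_swap_sub_le (x := x ∘ σ) (fun i => hx (σ i)) hy a.1 a.2
    _ = _ := by
        nth_rw 2 [← Real.mul_self_sqrt (Nat.cast_nonneg (Fintype.card ι))]
        rcases eq_or_ne √(Fintype.card ι : ℝ) 0 with h | h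
        · simp [h]
        · field_simp

theorem abs_sum_permCorr_mul_swap_sub_sq_sub_le (hx : ∀ i, x i ^ 2 = 1) (hy : ∀ i, y i ^ 2 = 1)
    (hxx : 0 < sampleCov x x) (hyy : 0 < sampleCov y y) (σ : Equiv.Perm ι) :
    |∑ a : ι × ι,
        (permCorr x y (Equiv.mulRight (Equiv.swap a.1 a.2) σ) - permCorr x y σ) ^ 2
        - 4 * Fintype.card ι| ≤
      4 * permCorr x y σ ^ 2
        + 8 * √(Fintype.card ι) / (√(sampleCov x x) * √(sampleCov y y)) * |permCorr x y σ| := by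
  have hmean : |sampleMean x * sampleMean y| ≤ 1 := by
    rw [abs_mul]
    exact mul_le_one₀ (abs_sampleMean_le_one hx) (abs_nonneg _) (abs_sampleMean_le_one hy)
  rw [sum_permCorr_mul_swap_sub_sq hx hy hxx hyy, add_assoc, add_sub_cancel_left]
  refine (abs_add_le _ _).trans ?_
  rw [abs_of_nonneg (by positivity : 0 ≤ 4 * permCorr x y σ ^ 2), abs_mul, abs_div, abs_mul,
    abs_of_nonneg (by positivity : 0 ≤ 8 * √(Fintype.card ι : ℝ)),
    abs_of_nonneg (by positivity : 0 ≤ √(sampleCov x x) * √(sampleCov y y))]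
  gcongr 4 * _ + ?_ / _ * _
  exact mul_le_of_le_one_right (by positivity) hmean

theorem expect_abs_sum_permCorr_mul_swap_sub_sq_sub_le (hx : ∀ i, x i ^ 2 = 1)
    (hy : ∀ i, y i ^ 2 = 1) (hxx : 0 < sampleCov x x) (hyy : 0 < sampleCov y y) :
    (𝔼 σ, |∑ a : ι × ι,
        (permCorr x y (Equiv.mulRight (Equiv.swap a.1 a.2) σ) - permCorr x y σ) ^ 2
        - 4 * Fintype.card ι|) / (4 * Fintype.card ι) ≤
      5 / (√(Fintype.card ι) * (√(sampleCov x x) * √(sampleCov y y))) := by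
  have := nonempty_of_sampleCov_ne_zero hxx.ne'
  have hn : (1 : ℝ) ≤ Fintype.card ι := by exact_mod_cast Fintype.card_pos (α := ι)
  set N := √(Fintype.card ι : ℝ)
  have hN_sq : (Fintype.card ι : ℝ) = N * N := (Real.mul_self_sqrt (by positivity)).symm
  have hN_one : 1 ≤ N := Real.one_le_sqrt.2 hn
  set s := √(sampleCov x x) * √(sampleCov y y)
  have hs_pos : 0 < s := by positivity
  have hs_le : s ≤ 1 := mul_le_one₀ (Real.sqrt_le_one.2 (sampleCov_self_le_one hx))
    (Real.sqrt_nonneg _) (Real.sqrt_le_one.2 (sampleCov_self_le_one hy))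
  have pointwise (σ : Equiv.Perm ι) := calc
    |∑ a : ι × ι,
        (permCorr x y (Equiv.mulRight (Equiv.swap a.1 a.2) σ) - permCorr x y σ) ^ 2
        - 4 * Fintype.card ι|
    _ ≤ 4 * permCorr x y σ ^ 2 + 8 * N / s * |permCorr x y σ| :=
        abs_sum_permCorr_mul_swap_sub_sq_sub_le hx hy hxx hyy σ
    _ ≤ 4 * permCorr x y σ ^ 2 + 8 * N / s * ((1 + permCorr x y σ ^ 2) / 2) := by
        gcongr
        nlinarith [sq_abs (permCorr x y σ), sq_nonneg (|permCorr x y σ| - 1)]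
  calc _ ≤ (4 * 2 + 8 * N / s * ((1 + 2) / 2)) / (4 * Fintype.card ι) := by
        gcongr
        refine (Finset.expect_le_expect fun σ _ => pointwise σ).trans ?_
        simp only [Finset.expect_add_distrib, ← Finset.mul_expect, ← Finset.expect_div,
          Fintype.expect_const]
        gcongr <;> exact expect_permCorr_sq_le_two hx hy hxx hyy
    _ = 2 * (s / N) / (N * s) + 3 / (N * s) := by
        rw [hN_sq]
        field_simp
        ring
    _ ≤ 2 * 1 / (N * s) + 3 / (N * s) := by
        gcongr
        exact div_le_one_of_le₀ (hs_le.trans hN_one) (by positivity)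
    _ = 5 / (N * s) := by ring

theorem norm_expect_exp_permCorr_sub_exp_le_of_pos (hx : ∀ i, x i ^ 2 = 1)
    (hy : ∀ i, y i ^ 2 = 1) (hxx : 0 < sampleCov x x) (hyy : 0 < sampleCov y y) (t : ℝ) :
    ‖𝔼 σ, Complex.exp (t * permCorr x y σ * Complex.I) - Complex.exp (-t ^ 2 / 2)‖ ≤
      |t| * (5 * |t| + 8 * t ^ 2)
        / (√(Fintype.card ι) * (√(sampleCov x x) * √(sampleCov y y))) := by
  have := nonempty_of_sampleCov_ne_zero hxx.ne'
  have hvar := expect_abs_sum_permCorr_mul_swap_sub_sq_sub_le hx hy hxx hyy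
  have stein := norm_expect_exp_sub_exp_le (c := 2 * Fintype.card ι)
    (by positivity) (fun a : ι × ι => involutive_mulRight_swap a.1 a.2)
    (sum_permCorr_mul_swap_sub x y) (by positivity) (abs_permCorr_mul_swap_sub_le hx hy) t
  rw [← mul_assoc 2, show (2 : ℝ) * 2 = 4 by norm_num] at stein
  calc _ ≤ (|t| * (5 / (√(Fintype.card ι) * (√(sampleCov x x) * √(sampleCov y y))))
        + t ^ 2 * (4 / (√(Fintype.card ι) * (√(sampleCov x x) * √(sampleCov y y)))) * 2)
        * |t| := by
        refine stein.trans ?_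
        gcongr
        exact expect_permCorr_sq_le_two hx hy hxx hyy
    _ = _ := by ring

end PermutationCLT

section SignImbalance

variable {ι : Type*} {x y : ι → ℝ}

/-- The number of coordinates of `x` equal to `ε`, used for `ε = 1` and `ε = -1`. -/
def signCount (ε : ℝ) (x : ι → ℝ) : ℕ := {i | x i = ε}.ncard

/-- For a `±1` configuration with `N₊` plus and `N₋` minus spins, `1 / (N₊ + 1) + 1 / (N₋ + 1)`.
It measures how far the configuration is from being balanced; the shift by `1` keeps it finite
on constant configurations. -/
def signImbalance (x : ι → ℝ) : ℝ := 1 / (signCount 1 x + 1) + 1 / (signCount (-1) x + 1)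

theorem signImbalance_nonneg (x : ι → ℝ) : 0 ≤ signImbalance x := by
  rw [signImbalance]
  positivity

theorem signImbalance_le_two (x : ι → ℝ) : signImbalance x ≤ 2 := by
  have hle (k : ℕ) : 1 / (k + 1 : ℝ) ≤ 1 :=
    div_le_one_of_le₀ (by linarith [Nat.cast_nonneg (α := ℝ) k]) (by positivity)
  rw [signImbalance]
  linarith [hle (signCount 1 x), hle (signCount (-1) x)]

variable [Fintype ι]

theorem signCount_eq_sum (ε : ℝ) (x : ι → ℝ) :
    (signCount ε x : ℝ) = ∑ i, if x i = ε then (1 : ℝ) else 0 := by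
  rw [signCount, Set.ncard_eq_toFinset_card', Finset.sum_boole]
  simp

theorem signCount_one_add_signCount_neg_one (hx : ∀ i, x i ^ 2 = 1) :
    (signCount 1 x + signCount (-1) x : ℝ) = Fintype.card ι := by
  rw [signCount_eq_sum, signCount_eq_sum, ← Finset.sum_add_distrib, Fintype.card_eq_sum_ones,
    Nat.cast_sum]
  refine Finset.sum_congr rfl fun i _ => ?_
  rcases sq_eq_one_iff.1 (hx i) with h | h <;> norm_num [h]

theorem signCount_one_sub_signCount_neg_one (hx : ∀ i, x i ^ 2 = 1) :
    (signCount 1 x - signCount (-1) x : ℝ) = ∑ i, x i := by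
  rw [signCount_eq_sum, signCount_eq_sum, ← Finset.sum_sub_distrib]
  refine Finset.sum_congr rfl fun i _ => ?_
  rcases sq_eq_one_iff.1 (hx i) with h | h <;> norm_num [h]

theorem sampleCov_self_eq_signCount (hx : ∀ i, x i ^ 2 = 1) :
    sampleCov x x = 4 * signCount 1 x * signCount (-1) x / (Fintype.card ι : ℝ) ^ 2 := by
  rcases isEmpty_or_nonempty ι with hι | hι
  · simp [sampleCov]
  · have hn : (Fintype.card ι : ℝ) ≠ 0 := by exact_mod_cast Fintype.card_ne_zero
    rw [sampleCov_self_eq_of_sq_eq_one hx, sampleMean, ← signCount_one_sub_signCount_neg_one hx]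
    field_simp
    rw [← signCount_one_add_signCount_neg_one hx]
    ring

theorem inv_sampleCov_self_le_signImbalance (hx : ∀ i, x i ^ 2 = 1) (hxx : 0 < sampleCov x x) :
    (sampleCov x x)⁻¹ ≤ Fintype.card ι / 2 * signImbalance x := by
  have hcov := sampleCov_self_eq_signCount hx
  have hcard := signCount_one_add_signCount_neg_one hx
  have hprod : 0 < signCount 1 x * signCount (-1) x := by
    by_contra! h
    have : (signCount 1 x : ℝ) * signCount (-1) x = 0 := by exact_mod_cast Nat.le_zero.1 h
    rw [hcov, mul_assoc, this] at hxx
    simp at hxx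
  have hplus : (1 : ℝ) ≤ signCount 1 x := by exact_mod_cast Nat.pos_of_mul_pos_right hprod
  have hminus : (1 : ℝ) ≤ signCount (-1) x := by exact_mod_cast Nat.pos_of_mul_pos_left hprod
  rw [hcov, signImbalance, ← hcard]
  set a : ℝ := (signCount 1 x : ℝ)
  set b : ℝ := (signCount (-1) x : ℝ)
  rw [inv_div, div_add_div _ _ (by positivity) (by positivity), div_mul_div_comm,
    div_le_div_iff₀ (by positivity) (by positivity)]
  have key : (a + b) * ((a + 1) * (b + 1)) ≤ 2 * (a * b) * (a + b + 2) := by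
    nlinarith [mul_nonneg (sub_nonneg.2 hplus) (sub_nonneg.2 hminus)]
  nlinarith [mul_le_mul_of_nonneg_left key (by positivity : 0 ≤ a + b)]

theorem one_le_signImbalance (hx : ∀ i, x i ^ 2 = 1) (hxx : ¬ 0 < sampleCov x x) :
    1 ≤ signImbalance x := by
  have hzero : signCount 1 x = 0 ∨ signCount (-1) x = 0 := by
    by_contra! h
    have hplus := Nat.pos_of_ne_zero h.1
    have hminus := Nat.pos_of_ne_zero h.2
    have hcard : 0 < (Fintype.card ι : ℝ) := by
      rw [← signCount_one_add_signCount_neg_one hx]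
      positivity
    refine hxx ?_
    rw [sampleCov_self_eq_signCount hx]
    positivity
  have hplus : 0 ≤ 1 / (signCount 1 x + 1 : ℝ) := by positivity
  have hminus : 0 ≤ 1 / (signCount (-1) x + 1 : ℝ) := by positivity
  rw [signImbalance]
  rcases hzero with h | h
  · simpa [h] using hminus
  · simpa [h] using hplus

theorem one_div_sqrt_mul_sqrt_le {a b : ℝ} (ha : 0 ≤ a) (hb : 0 ≤ b) :
    1 / (√a * √b) ≤ (a⁻¹ + b⁻¹) / 2 := by
  have := two_mul_le_add_sq (√a)⁻¹ (√b)⁻¹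
  rw [inv_pow, inv_pow, Real.sq_sqrt ha, Real.sq_sqrt hb] at this
  rw [one_div, mul_inv]
  linarith

theorem norm_exp_neg_sq_div_two_le_one (t : ℝ) : ‖Complex.exp (-t ^ 2 / 2)‖ ≤ 1 := by
  rw [← Complex.ofReal_pow, ← Complex.ofReal_neg, ← Complex.ofReal_ofNat,
    ← Complex.ofReal_div, Complex.norm_exp_ofReal, Real.exp_le_one_iff]
  linarith [sq_nonneg t]

theorem norm_expect_exp_mul_I_le_one {Ω : Type*} [Fintype Ω] [Nonempty Ω] (W : Ω → ℝ) (t : ℝ) :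
    ‖𝔼 ω, Complex.exp (t * W ω * Complex.I)‖ ≤ 1 := by
  refine (RCLike.norm_expect_le (K := ℂ)).trans
    (Finset.expect_le Finset.univ_nonempty fun ω _ => ?_)
  rw [← Complex.ofReal_mul, Complex.norm_exp_ofReal_mul_I]

theorem norm_expect_exp_permCorr_sub_exp_le [DecidableEq ι] [Nonempty ι]
    (hx : ∀ i, x i ^ 2 = 1) (hy : ∀ i, y i ^ 2 = 1) (t : ℝ) :
    ‖𝔼 σ, Complex.exp (t * permCorr x y σ * Complex.I) - Complex.exp (-t ^ 2 / 2)‖ ≤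
      (2 + |t| * (5 * |t| + 8 * t ^ 2))
        * (√(Fintype.card ι) * (signImbalance x + signImbalance y)) := by
  have hn : (1 : ℝ) ≤ √(Fintype.card ι) :=
    Real.one_le_sqrt.2 (by exact_mod_cast Fintype.card_pos (α := ι))
  have hx₀ := signImbalance_nonneg x
  have hy₀ := signImbalance_nonneg y
  by_cases hpos : 0 < sampleCov x x ∧ 0 < sampleCov y y
  · obtain ⟨hxx, hyy⟩ := hpos
    have hinv : 1 / (√(sampleCov x x) * √(sampleCov y y)) ≤
        Fintype.card ι * (signImbalance x + signImbalance y) := by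
      have hx₁ := inv_sampleCov_self_le_signImbalance hx hxx
      have hy₁ := inv_sampleCov_self_le_signImbalance hy hyy
      refine (one_div_sqrt_mul_sqrt_le hxx.le hyy.le).trans ?_
      have : 0 ≤ Fintype.card ι * (signImbalance x + signImbalance y) := by positivity
      linarith
    calc _ ≤ |t| * (5 * |t| + 8 * t ^ 2) / √(Fintype.card ι)
          * (1 / (√(sampleCov x x) * √(sampleCov y y))) := by
          refine (norm_expect_exp_permCorr_sub_exp_le_of_pos hx hy hxx hyy t).trans_eq ?_
          rw [div_mul_div_comm, mul_one]
      _ ≤ |t| * (5 * |t| + 8 * t ^ 2) / √(Fintype.card ι)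
          * (Fintype.card ι * (signImbalance x + signImbalance y)) := by gcongr
      _ = |t| * (5 * |t| + 8 * t ^ 2)
          * (√(Fintype.card ι) * (signImbalance x + signImbalance y)) := by
          rw [div_mul_eq_mul_div, mul_div_assoc, mul_div_right_comm, Real.div_sqrt]
      _ ≤ _ := by
          gcongr
          linarith
  · have hone : 1 ≤ signImbalance x + signImbalance y := by
      rcases not_and_or.1 hpos with h | h
      · linarith [one_le_signImbalance hx h]
      · linarith [one_le_signImbalance hy h]
    calc _ ≤ 1 + 1 := norm_sub_le_of_le (norm_expect_exp_mul_I_le_one _ _)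
          (norm_exp_neg_sq_div_two_le_one t)
      _ = 2 * (1 * 1) := by norm_num
      _ ≤ _ := by
        gcongr
        exact le_add_of_nonneg_right (by positivity)

end SignImbalance

/-- The law of a random vector is exchangeable if it is invariant under all permutations of the
coordinates. -/
def IsExchangeable {ι : Type*} (μ : Measure (ι → ℝ)) : Prop :=
  ∀ σ : Equiv.Perm ι, μ.map (fun x => x ∘ σ) = μ

section SpinFlip

variable {ι : Type*} [DecidableEq ι]

theorem involutive_update_not (i : ι) :
    Function.Involutive fun s : ι → Bool => Function.update s i (!s i) := fun s => by
  simp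

variable [Fintype ι]

theorem card_filter_update_not_add_one {s : ι → Bool} {b : Bool} {i : ι} (hi : s i = b) :
    Finset.card {j | Function.update s i (!s i) j = b} + 1 = Finset.card {j | s j = b} := by
  have herase : ({j | Function.update s i (!s i) j = b} : Finset ι) =
      ({j | s j = b} : Finset ι).erase i := by
    ext j
    rcases eq_or_ne j i with rfl | hj
    · simp [hi]
    · simp [hj]
  rw [herase, Finset.card_erase_add_one (by simpa using hi)]

/-- Flipping the spin at `i` maps the configurations with `s i ≠ b` onto those with `s i = b` and
raises the number of spins equal to `b` by one. -/
theorem sum_ite_div_card_add_one_le {w : (ι → Bool) → ℝ} {C : ℝ}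
    (hw : ∀ s i, w (Function.update s i (!s i)) ≤ C * w s) (b : Bool) (i : ι) :
    (∑ s, if s i = b then 0 else w s / (Finset.card {j | s j = b} + 1)) ≤
      ∑ s, if s i = b then C * w s / Finset.card {j | s j = b} else 0 := by
  rw [← Equiv.sum_comp (involutive_update_not i).toPerm]
  refine Finset.sum_le_sum fun s _ => ?_
  rw [Function.Involutive.coe_toPerm]
  by_cases hi : s i = b
  · have hflip : ¬ Function.update s i (!s i) i = b := by simp [hi]
    have hcount : (Finset.card {j | Function.update s i (!s i) j = b} + 1 : ℝ) =
        Finset.card {j | s j = b} := by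
      exact_mod_cast card_filter_update_not_add_one hi
    rw [if_neg hflip, if_pos hi, hcount]
    gcongr
    exact hw s i
  · have hflip : Function.update s i (!s i) i = b := by simpa using (Bool.not_eq.2 hi)
    rw [if_pos hflip, if_neg hi]

theorem sum_mul_card_add_one_div_le {w : (ι → Bool) → ℝ} {C : ℝ} (hC : 0 ≤ C) (hw₀ : ∀ s, 0 ≤ w s)
    (hw : ∀ s i, w (Function.update s i (!s i)) ≤ C * w s) (b : Bool) :
    ∑ s, w s * ((Fintype.card ι + 1) / (Finset.card {i | s i = b} + 1)) ≤
      (1 + C) * ∑ s, w s := by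
  set N : (ι → Bool) → ℕ := fun s => Finset.card {i | s i = b}
  have expand (s : ι → Bool) : w s * ((Fintype.card ι + 1) / (N s + 1)) =
      w s + ∑ i, if s i = b then 0 else w s / (N s + 1) := by
    have hcompl : Fintype.card ι = N s + Finset.card {i | ¬ s i = b} :=
      (Finset.card_filter_add_card_filter_not (s := Finset.univ) fun i => s i = b).symm
    rw [Finset.sum_ite, Finset.sum_const_zero, Finset.sum_const, nsmul_eq_mul, zero_add, hcompl]
    push_cast
    field_simp
    ring
  have count (s : ι → Bool) : (∑ i, if s i = b then C * w s / N s else 0) ≤ C * w s := by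
    rw [Finset.sum_ite, Finset.sum_const_zero, Finset.sum_const, nsmul_eq_mul, add_zero,
      mul_div_left_comm]
    exact mul_le_of_le_one_right (mul_nonneg hC (hw₀ s)) (div_self_le_one _)
  calc ∑ s, w s * ((Fintype.card ι + 1) / (N s + 1))
      = ∑ s, w s + ∑ i, ∑ s, if s i = b then 0 else w s / (N s + 1) := by
        simp only [expand, Finset.sum_add_distrib]
        rw [Finset.sum_comm]
    _ ≤ ∑ s, w s + ∑ i, ∑ s, if s i = b then C * w s / N s else 0 := by
        exact add_le_add_right (Finset.sum_le_sum fun i _ =>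
          sum_ite_div_card_add_one_le hw b i) _
    _ ≤ ∑ s, w s + ∑ s, C * w s := by
        rw [Finset.sum_comm]
        exact add_le_add_right (Finset.sum_le_sum fun s _ => count s) _
    _ = (1 + C) * ∑ s, w s := by rw [← Finset.mul_sum]; ring

end SpinFlip

section IsingMeasure

variable {ι : Type*}

theorem pmVec_sq_eq_one (s : ι → Bool) (i : ι) : pmVec s i ^ 2 = 1 := by
  unfold pmVec
  split_ifs <;> norm_num

theorem pmVec_comp (s : ι → Bool) (f : ι → ι) : pmVec (s ∘ f) = pmVec s ∘ f := rfl

variable [Fintype ι]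

theorem signImbalance_pmVec (s : ι → Bool) :
    signImbalance (pmVec s) = 1 / ((Finset.card {i | s i = true} : ℝ) + 1)
      + 1 / ((Finset.card {i | s i = false} : ℝ) + 1) := by
  have hplus : {i | pmVec s i = 1} = ({i | s i = true} : Finset ι) := by
    ext i
    cases h : s i <;> norm_num [pmVec, h]
  have hminus : {i | pmVec s i = -1} = ({i | s i = false} : Finset ι) := by
    ext i
    cases h : s i <;> norm_num [pmVec, h]
  rw [signImbalance, signCount, signCount, hplus, hminus, Set.ncard_coe_finset,
    Set.ncard_coe_finset]

theorem isingWeight_pos (β : ℝ) (Q : Matrix ι ι ℝ) (z : ι → ℝ) : 0 < isingWeight β Q z :=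
  Real.exp_pos _

theorem isingWeight_comp_perm (β : ℝ) {Q : Matrix ι ι ℝ} {σ : Equiv.Perm ι}
    (hQ : Q.submatrix σ σ = Q) (z : ι → ℝ) : isingWeight β Q (z ∘ σ) = isingWeight β Q z := by
  nth_rw 1 [isingWeight, ← hQ]
  rw [Matrix.submatrix_mulVec_equiv, comp_equiv_dotProduct_comp_equiv, Function.comp_assoc,
    Equiv.self_comp_symm, Function.comp_id, isingWeight]

variable [DecidableEq ι]

theorem isingZ_pos (β : ℝ) (Q : Matrix ι ι ℝ) : 0 < isingZ ι β Q :=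
  Finset.sum_pos (fun _ _ => isingWeight_pos β Q _) Finset.univ_nonempty

instance isingMeasure.instIsProbabilityMeasure (β : ℝ) (Q : Matrix ι ι ℝ) :
    IsProbabilityMeasure (isingMeasure ι β Q) := by
  constructor
  have hweight (s : ι → Bool) : 0 ≤ isingWeight β Q (pmVec s) / isingZ ι β Q :=
    div_nonneg (isingWeight_pos β Q _).le (isingZ_pos β Q).le
  simp only [isingMeasure, Measure.finsetSum_apply, Measure.smul_apply, measure_univ,
    smul_eq_mul, mul_one]
  rw [← ENNReal.ofReal_sum_of_nonneg fun s _ => hweight s, ← Finset.sum_div, ← isingZ,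
    div_self (isingZ_pos β Q).ne', ENNReal.ofReal_one]

theorem ae_isingMeasure_sq_eq_one (β : ℝ) (Q : Matrix ι ι ℝ) :
    ∀ᵐ x ∂isingMeasure ι β Q, ∀ i, x i ^ 2 = 1 := by
  rw [isingMeasure, ae_finsetSum_measure_iff]
  refine fun s _ => Measure.ae_smul_measure ?_ _
  rw [ae_dirac_eq]
  exact pmVec_sq_eq_one s

theorem isExchangeable_isingMeasure (β : ℝ) {Q : Matrix ι ι ℝ}
    (hQ : ∀ σ : Equiv.Perm ι, Q.submatrix σ σ = Q) : IsExchangeable (isingMeasure ι β Q) := by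
  intro σ
  have hσ : Measurable fun x : ι → ℝ => x ∘ σ := by fun_prop
  ext S hS
  rw [Measure.map_apply hσ hS]
  simp only [isingMeasure, Measure.finsetSum_apply, Measure.smul_apply,
    Measure.dirac_apply' _ hS, Measure.dirac_apply' _ (hσ hS)]
  refine Fintype.sum_equiv (σ.symm.arrowCongr (Equiv.refl Bool)) _ _ fun s => ?_
  have : (σ.symm.arrowCongr (Equiv.refl Bool)) s = s ∘ σ := rfl
  rw [this, pmVec_comp, isingWeight_comp_perm β (hQ σ)]
  rfl

theorem integral_isingMeasure (β : ℝ) (Q : Matrix ι ι ℝ) (f : (ι → ℝ) → ℝ) :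
    ∫ x, f x ∂isingMeasure ι β Q =
      (∑ s, isingWeight β Q (pmVec s) * f (pmVec s)) / isingZ ι β Q := by
  rw [isingMeasure, integral_finsetSum_measure fun s _ =>
    (integrable_dirac enorm_lt_top).smul_measure ENNReal.ofReal_ne_top, Finset.sum_div]
  refine Finset.sum_congr rfl fun s _ => ?_
  rw [integral_smul_measure, integral_dirac, ENNReal.toReal_ofReal
    (div_nonneg (isingWeight_pos β Q _).le (isingZ_pos β Q).le), smul_eq_mul, div_mul_eq_mul_div]

theorem isingWeight_update_not_le {Q : Matrix ι ι ℝ} {K : ℝ} (hQ : Q.IsSymm)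
    (hK : ∀ i, ∑ j, |Q i j| ≤ K) (β : ℝ) (s : ι → Bool) (i : ι) :
    isingWeight β Q (pmVec (Function.update s i (!s i))) ≤
      Real.exp (2 * |β| * K) * isingWeight β Q (pmVec s) := by
  have hflip : pmVec (Function.update s i (!s i)) = pmVec s - Pi.single i (2 * pmVec s i) := by
    funext j
    rcases eq_or_ne j i with rfl | hj
    · cases h : s j <;> norm_num [pmVec, h]
    · simp [pmVec, hj]
  set z := pmVec s
  have hsq (j : ι) : z j ^ 2 = 1 := pmVec_sq_eq_one s j
  have hquad : (z - Pi.single i (2 * z i)) ⬝ᵥ Q *ᵥ (z - Pi.single i (2 * z i)) =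
      z ⬝ᵥ Q *ᵥ z - 4 * ∑ j, Q i j * (z i * z j - if i = j then 1 else 0) := by
    have hsum : ∑ j, Q i j * (z i * z j - if i = j then 1 else 0) = z i * (Q *ᵥ z) i - Q i i := by
      simp [mul_sub, Matrix.mulVec, dotProduct, Finset.mul_sum, mul_left_comm]
    have hcross (a : ℝ) : z ⬝ᵥ Q *ᵥ Pi.single i a = a * (Q *ᵥ z) i := by
      rw [Matrix.dotProduct_mulVec, dotProduct_single, ← Matrix.mulVec_transpose, hQ.eq, mul_comm]
    have hdiag (a : ℝ) : (Q *ᵥ Pi.single i a) i = a * Q i i := by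
      simp [Matrix.mulVec_single, mul_comm]
    rw [hsum, Matrix.mulVec_sub, dotProduct_sub, sub_dotProduct, sub_dotProduct, hcross,
      single_dotProduct, single_dotProduct, hdiag]
    linear_combination 4 * Q i i * hsq i
  have hbound : |∑ j, Q i j * (z i * z j - if i = j then 1 else 0)| ≤ K := by
    refine (Finset.abs_sum_le_sum_abs _ _).trans ((Finset.sum_le_sum fun j _ => ?_).trans (hK i))
    rw [abs_mul]
    refine mul_le_of_le_one_right (abs_nonneg _) ?_
    rcases eq_or_ne i j with rfl | hij
    · simp [← sq, hsq i]
    · have : (z i * z j) ^ 2 = 1 := by rw [mul_pow, hsq, hsq, one_mul]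
      simpa [hij] using (sq_le_one_iff_abs_le_one _).1 this.le
  rw [isingWeight, isingWeight, hflip, hquad, ← Real.exp_add, Real.exp_le_exp]
  have := mul_le_mul_of_nonneg_left hbound (abs_nonneg β)
  rw [← abs_mul] at this
  linarith [neg_abs_le (β * ∑ j, Q i j * (z i * z j - if i = j then 1 else 0))]

theorem integral_signImbalance_isingMeasure_le {Q : Matrix ι ι ℝ} {K : ℝ} (hQ : Q.IsSymm)
    (hK : ∀ i, ∑ j, |Q i j| ≤ K) (β : ℝ) :
    ∫ x, signImbalance x ∂isingMeasure ι β Q ≤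
      2 * (1 + Real.exp (2 * |β| * K)) / (Fintype.card ι + 1) := by
  set C := Real.exp (2 * |β| * K)
  have count (b : Bool) := sum_mul_card_add_one_div_le (w := fun s => isingWeight β Q (pmVec s))
    (Real.exp_pos (2 * |β| * K)).le (fun s => (isingWeight_pos β Q _).le)
    (isingWeight_update_not_le hQ hK β) b
  have hZ := isingZ_pos β Q
  have hn : (0 : ℝ) < Fintype.card ι + 1 := by positivity
  rw [integral_isingMeasure, div_le_div_iff₀ hZ hn, Finset.sum_mul]
  calc ∑ s, isingWeight β Q (pmVec s) * signImbalance (pmVec s) * (Fintype.card ι + 1)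
      = ∑ s, isingWeight β Q (pmVec s)
            * ((Fintype.card ι + 1) / (Finset.card {i | s i = true} + 1))
          + ∑ s, isingWeight β Q (pmVec s)
            * ((Fintype.card ι + 1) / (Finset.card {i | s i = false} + 1)) := by
        rw [← Finset.sum_add_distrib]
        refine Finset.sum_congr rfl fun s _ => ?_
        rw [signImbalance_pmVec]
        ring
    _ ≤ (1 + C) * isingZ ι β Q + (1 + C) * isingZ ι β Q := add_le_add (count true) (count false)
    _ = 2 * (1 + C) * isingZ ι β Q := by ring

end IsingMeasure

section ExchangeableSamples

section Measurability

variable {ι : Type*}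

@[fun_prop]
theorem measurable_sampleCorr [Fintype ι] :
    Measurable fun p : (ι → ℝ) × (ι → ℝ) => sampleCorr p.1 p.2 := by
  unfold sampleCorr sampleMean
  fun_prop

variable [Finite ι]

theorem measurable_signImbalance : Measurable (signImbalance : (ι → ℝ) → ℝ) := by
  cases nonempty_fintype ι
  have hcount (ε : ℝ) : Measurable fun x : ι → ℝ => (signCount ε x : ℝ) := by
    simp only [signCount_eq_sum]
    exact Finset.measurable_fun_sum _ fun i _ => Measurable.ite
      (measurableSet_eq_fun (measurable_pi_apply i) measurable_const)
      measurable_const measurable_const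
  unfold signImbalance
  exact (((hcount 1).add_const 1).const_div 1).add (((hcount (-1)).add_const 1).const_div 1)

theorem integrable_signImbalance (μ : Measure (ι → ℝ)) [IsFiniteMeasure μ] :
    Integrable signImbalance μ :=
  Integrable.of_bound measurable_signImbalance.aestronglyMeasurable 2 <| ae_of_all _ fun x => by
    rw [Real.norm_of_nonneg (signImbalance_nonneg x)]
    exact signImbalance_le_two x

end Measurability

variable {ι : Type*} [Fintype ι] {μ ν : Measure (ι → ℝ)} [IsProbabilityMeasure μ]
  [IsProbabilityMeasure ν]

theorem integrable_exp_permCorr (t : ℝ) (σ : Equiv.Perm ι) :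
    Integrable (fun p => Complex.exp (t * permCorr p.1 p.2 σ * Complex.I)) (μ.prod ν) := by
  have hmeas : Measurable fun p : (ι → ℝ) × (ι → ℝ) => permCorr p.1 p.2 σ := by
    unfold permCorr
    fun_prop
  refine Integrable.of_bound (by fun_prop) 1 (ae_of_all _ fun p => ?_)
  rw [← Complex.ofReal_mul, Complex.norm_exp_ofReal_mul_I]

theorem charFun_map_sqrt_card_mul_sampleCorr [DecidableEq ι] (hμ : IsExchangeable μ) (t : ℝ) :
    charFun ((μ.prod ν).map fun p => √(Fintype.card ι) * sampleCorr p.1 p.2) t =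
      ∫ p, 𝔼 σ, Complex.exp (t * permCorr p.1 p.2 σ * Complex.I) ∂μ.prod ν := by
  set F : (ι → ℝ) × (ι → ℝ) → ℂ := fun p =>
    Complex.exp (t * (√(Fintype.card ι) * sampleCorr p.1 p.2 : ℝ) * Complex.I) with hF
  have hF_meas : Measurable F := by fun_prop
  have hperm (σ : Equiv.Perm ι) :
      MeasurePreserving (Prod.map (fun x : ι → ℝ => x ∘ σ) id) (μ.prod ν) (μ.prod ν) :=
    MeasurePreserving.prod ⟨by fun_prop, hμ σ⟩ (MeasurePreserving.id ν)
  have hintegral (σ : Equiv.Perm ι) :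
      ∫ p, Complex.exp (t * permCorr p.1 p.2 σ * Complex.I) ∂μ.prod ν = ∫ p, F p ∂μ.prod ν := by
    rw [← (hperm σ).map_eq, integral_map (hperm σ).aemeasurable hF_meas.aestronglyMeasurable,
      (hperm σ).map_eq]
    rfl
  rw [charFun_apply_real, integral_map (by fun_prop) (by fun_prop)]
  simp only [Fintype.expect_eq_sum_div_card]
  rw [integral_div, integral_finsetSum _ fun σ _ => integrable_exp_permCorr t σ]
  simp [hintegral, hF]

theorem norm_charFun_map_sqrt_card_mul_sampleCorr_sub_le [Nonempty ι] (hμ : IsExchangeable μ)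
    (hμ_sign : ∀ᵐ x ∂μ, ∀ i, x i ^ 2 = 1) (hν_sign : ∀ᵐ y ∂ν, ∀ i, y i ^ 2 = 1) (t : ℝ) :
    ‖charFun ((μ.prod ν).map fun p => √(Fintype.card ι) * sampleCorr p.1 p.2) t
        - Complex.exp (-t ^ 2 / 2)‖ ≤
      (2 + |t| * (5 * |t| + 8 * t ^ 2)) * (√(Fintype.card ι)
        * (∫ x, signImbalance x ∂μ + ∫ y, signImbalance y ∂ν)) := by
  classical
  have hbound : ∀ᵐ p ∂μ.prod ν,
      ‖𝔼 σ, Complex.exp (t * permCorr p.1 p.2 σ * Complex.I) - Complex.exp (-t ^ 2 / 2)‖ ≤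
        (2 + |t| * (5 * |t| + 8 * t ^ 2))
          * (√(Fintype.card ι) * (signImbalance p.1 + signImbalance p.2)) := by
    filter_upwards [Measure.quasiMeasurePreserving_fst.ae hμ_sign,
      Measure.quasiMeasurePreserving_snd.ae hν_sign] with p hx hy
    exact norm_expect_exp_permCorr_sub_exp_le hx hy t
  have hfst := (integrable_signImbalance μ).comp_fst ν
  have hsnd := (integrable_signImbalance ν).comp_snd μ
  have hexpect : Integrable
      (fun p => 𝔼 σ, Complex.exp (t * permCorr p.1 p.2 σ * Complex.I)) (μ.prod ν) := by
    simp only [Fintype.expect_eq_sum_div_card]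
    exact (integrable_finsetSum _ fun σ _ => integrable_exp_permCorr t σ).div_const _
  calc _ = ‖∫ p, (𝔼 σ, Complex.exp (t * permCorr p.1 p.2 σ * Complex.I)
          - Complex.exp (-t ^ 2 / 2)) ∂μ.prod ν‖ := by
        rw [charFun_map_sqrt_card_mul_sampleCorr hμ, integral_sub hexpect (integrable_const _)]
        simp
    _ ≤ ∫ p, (2 + |t| * (5 * |t| + 8 * t ^ 2))
          * (√(Fintype.card ι) * (signImbalance p.1 + signImbalance p.2)) ∂μ.prod ν :=
        norm_integral_le_of_norm_le (((hfst.add hsnd).const_mul _).const_mul _) hbound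
    _ = _ := by
        rw [integral_const_mul, integral_const_mul, integral_add hfst hsnd, integral_fun_fst,
          integral_fun_snd]
        simp

theorem tendstoInDistribution_sqrt_mul_sampleCorr {μ ν : ∀ n, Measure (Fin n → ℝ)}
    [∀ n, IsProbabilityMeasure (μ n)] [∀ n, IsProbabilityMeasure (ν n)]
    (hμ : ∀ n, IsExchangeable (μ n)) (hμ_sign : ∀ n, ∀ᵐ x ∂μ n, ∀ i, x i ^ 2 = 1)
    (hν_sign : ∀ n, ∀ᵐ y ∂ν n, ∀ i, y i ^ 2 = 1)
    (hμ_imb : Tendsto (fun n : ℕ => √n * ∫ x, signImbalance x ∂μ n) atTop (𝓝 0))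
    (hν_imb : Tendsto (fun n : ℕ => √n * ∫ y, signImbalance y ∂ν n) atTop (𝓝 0)) :
    TendstoInDistribution
      (fun n => ((μ n).prod (ν n)).map fun p => √n * sampleCorr p.1 p.2) (gaussianReal 0 1) := by
  have : ∀ n, IsProbabilityMeasure (((μ n).prod (ν n)).map fun p => √n * sampleCorr p.1 p.2) :=
    fun n => Measure.isProbabilityMeasure_map (by fun_prop)
  suffices Tendsto (β := ProbabilityMeasure ℝ) (fun n => ⟨_, this n⟩) atTop
      (𝓝 ⟨gaussianReal 0 1, inferInstance⟩) from
    ProbabilityMeasure.tendsto_iff_forall_integral_tendsto.1 this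
  refine ProbabilityMeasure.tendsto_iff_tendsto_charFun.2 fun t => ?_
  have hgauss : charFun (gaussianReal 0 1) t = Complex.exp (-t ^ 2 / 2) := by
    simp [charFun_gaussianReal, neg_div]
  have hlim : Tendsto (fun n : ℕ => (2 + |t| * (5 * |t| + 8 * t ^ 2))
      * (√n * (∫ x, signImbalance x ∂μ n + ∫ y, signImbalance y ∂ν n))) atTop (𝓝 0) := by
    simpa only [mul_add (√_), add_zero, mul_zero] using
      (hμ_imb.add hν_imb).const_mul (2 + |t| * (5 * |t| + 8 * t ^ 2))
  refine tendsto_iff_norm_sub_tendsto_zero.2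
    (squeeze_zero' (Eventually.of_forall fun n => norm_nonneg _) ?_ hlim)
  filter_upwards [eventually_ge_atTop 1] with n hn
  have : Nonempty (Fin n) := ⟨⟨0, hn⟩⟩
  simpa [hgauss] using
    norm_charFun_map_sqrt_card_mul_sampleCorr_sub_le (hμ n) (hμ_sign n) (hν_sign n) t

end ExchangeableSamples

section CurieWeiss

theorem tendsto_sqrt_mul_integral_signImbalance_isingMeasure {Q : ∀ n, Matrix (Fin n) (Fin n) ℝ}
    {K : ℝ} (hQ : ∀ n, (Q n).IsSymm) (hK : ∀ n i, ∑ j, |Q n i j| ≤ K) (β : ℝ) :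
    Tendsto (fun n : ℕ => √n * ∫ x, signImbalance x ∂isingMeasure (Fin n) β (Q n)) atTop (𝓝 0) := by
  set C := 2 * (1 + Real.exp (2 * |β| * K))
  have hlim : Tendsto (fun n : ℕ => C / √n) atTop (𝓝 0) :=
    (Real.tendsto_sqrt_atTop.comp tendsto_natCast_atTop_atTop).const_div_atTop C
  refine squeeze_zero (fun n => mul_nonneg (Real.sqrt_nonneg _)
    (integral_nonneg signImbalance_nonneg)) (fun n => ?_) hlim
  calc √n * ∫ x, signImbalance x ∂isingMeasure (Fin n) β (Q n)
      ≤ √n * (C / (n + 1)) := by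
        gcongr
        simpa using integral_signImbalance_isingMeasure_le (hQ n) (hK n) β
    _ = √n / (n + 1) * C := by rw [mul_div_left_comm, mul_comm]
    _ ≤ 1 / √n * C := by
        refine mul_le_mul_of_nonneg_right ?_ (by positivity)
        rcases n.eq_zero_or_pos with rfl | hn
        · simp
        · rw [div_le_div_iff₀ (by positivity) (by positivity), Real.mul_self_sqrt n.cast_nonneg]
          linarith
    _ = C / √n := one_div_mul_eq_div _ _

theorem isSymm_QCW (n : ℕ) : (QCW n).IsSymm :=
  Matrix.IsSymm.ext fun i j => by simp only [QCW, eq_comm]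

theorem submatrix_QCW {n : ℕ} (σ : Equiv.Perm (Fin n)) : (QCW n).submatrix σ σ = QCW n := by
  ext i j
  simp only [Matrix.submatrix_apply, QCW, σ.injective.eq_iff]

theorem sum_abs_QCW_le_one (n : ℕ) (i : Fin n) : ∑ j, |QCW n i j| ≤ 1 := by
  calc ∑ j, |QCW n i j| ≤ ∑ _j : Fin n, (n : ℝ)⁻¹ := by
        refine Finset.sum_le_sum fun j _ => ?_
        rw [QCW]
        split_ifs <;> simp
    _ ≤ 1 := by simpa using mul_inv_le_one

theorem curieWeiss_sampleCorr_clt_general (β₁ β₂ : ℝ) {Q : ∀ n, Matrix (Fin n) (Fin n) ℝ} {K : ℝ}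
    (hQ : ∀ n, (Q n).IsSymm) (hK : ∀ n i, ∑ j, |Q n i j| ≤ K) :
    TendstoInDistribution
      (fun n => Measure.map
        (fun p : (Fin n → ℝ) × (Fin n → ℝ) => Real.sqrt n * sampleCorr p.1 p.2)
        ((isingMeasure (Fin n) β₁ (QCW n)).prod (isingMeasure (Fin n) β₂ (Q n))))
      (gaussianReal 0 1) :=
  tendstoInDistribution_sqrt_mul_sampleCorr
    (fun _ => isExchangeable_isingMeasure β₁ submatrix_QCW)
    (fun n => ae_isingMeasure_sq_eq_one β₁ (QCW n))
    (fun n => ae_isingMeasure_sq_eq_one β₂ (Q n))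
    (tendsto_sqrt_mul_integral_signImbalance_isingMeasure isSymm_QCW sum_abs_QCW_le_one β₁)
    (tendsto_sqrt_mul_integral_signImbalance_isingMeasure hQ hK β₂)

end CurieWeiss

/-- **Corollary 1 (Curie–Weiss, sample correlation).** If `X ~ P_{β₁,Q^{CW}}` and
`Y ~ P_{β₂,Q^{CW}}` are independent, then `√n ρₙ →d N(0,1)` for any `β₁, β₂ ≥ 0`. -/
theorem curieWeiss_sampleCorr_clt (β₁ β₂ : ℝ) (hβ₁ : 0 ≤ β₁) (hβ₂ : 0 ≤ β₂) :
    TendstoInDistribution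
      (fun n => Measure.map
        (fun p : (Fin n → ℝ) × (Fin n → ℝ) => Real.sqrt n * sampleCorr p.1 p.2)
        ((isingMeasure (Fin n) β₁ (QCW n)).prod (isingMeasure (Fin n) β₂ (QCW n))))
      (gaussianReal 0 1) :=
  curieWeiss_sampleCorr_clt_general β₁ β₂ isSymm_QCW sum_abs_QCW_le_one

end
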